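/- arXiv:2410.21852 — 3 statements merged into one kernel-verified Lean document; each statement's English description precedes it below -/
import Mathlib

section
/- Let η > 0, let N ≥ 1, let k_0 = 0 and ω_0 = 0, let k_1, …, k_N be nonzero real numbers, let ω_j = ω⁰ for j = 1,…,N where ω⁰ is a fixed real number, and let δ_0, …, δ_N be real numbers; set θ_j(X,T) = k_j X − ω_j T + δ_j. Then the function u(X,T) = η ∂_X log(Σ_{j=0}^N e^{θ_j(X,T)/η}) satisfies ∂_T(u + (η/u) ∂_X u) = 0 at every point (X,T) where u(X,T) ≠ 0. -/
/-!
Write `u = η F_X / F` with `F = Σ_j e^{θ_j/η}`. The logarithmic derivative of `u` is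
`F_XX / F_X - F_X / F`, so the conserved density collapses to `u + (η/u) u_X = η F_XX / F_X`.
Terms of `F` with `k_j = 0` do not contribute to `F_X`, and all others carry the same factor
`e^{-ω⁰ T/η}`; hence `T` enters `F_X` only through this factor and drops out of `F_XX / F_X`.
-/

section ViscousDensity

variable {𝕜 𝕜' : Type*} [NontriviallyNormedField 𝕜] [NontriviallyNormedField 𝕜']
  [NormedAlgebra 𝕜 𝕜']

theorem logDeriv_add_logDeriv_logDeriv {f : 𝕜 → 𝕜'} {x : 𝕜} (hfx : f x ≠ 0)
    (hf'x : deriv f x ≠ 0) (hf : DifferentiableAt 𝕜 f x)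
    (hf' : DifferentiableAt 𝕜 (deriv f) x) :
    logDeriv f x + logDeriv (logDeriv f) x = logDeriv (deriv f) x := by
  have hquot : logDeriv (logDeriv f) x = logDeriv (deriv f) x - logDeriv f x :=
    logDeriv_div x hf'x hfx hf' hf
  rw [hquot, add_sub_cancel]

/-- The density `u + (η/u) u'` whose conservation in time is equation (E2η), for a fixed time
slice `u` of the solution. Where `u` vanishes it takes the junk value `0`. -/
noncomputable def viscousDensity (η : 𝕜') (u : 𝕜 → 𝕜') (x : 𝕜) : 𝕜' :=
  u x + η / u x * deriv u x

theorem viscousDensity_const_mul (η : 𝕜') (v : 𝕜 → 𝕜') (x : 𝕜) :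
    viscousDensity η (fun y => η * v y) x = η * (v x + logDeriv v x) := by
  rw [viscousDensity, deriv_const_mul_field, logDeriv_apply]
  field_simp

theorem viscousDensity_const_mul_logDeriv (η : 𝕜') {f : 𝕜 → 𝕜'} {x : 𝕜}
    (hfx : f x ≠ 0) (hf'x : deriv f x ≠ 0) (hf : DifferentiableAt 𝕜 f x)
    (hf' : DifferentiableAt 𝕜 (deriv f) x) :
    viscousDensity η (fun y => η * logDeriv f y) x = η * logDeriv (deriv f) x := by
  rw [viscousDensity_const_mul, logDeriv_add_logDeriv_logDeriv hfx hf'x hf hf']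

end ViscousDensity

/-- The sum of exponentials `Σ_j e^{θ_j/η}` with phases `θ_j = k_j x - ω_j t + δ_j`, whose scaled
logarithmic derivative in `x` is the multi-kink function. Time is the first variable, so that
`kinkSum η k δ ω t` is a time slice. -/
noncomputable def kinkSum {ι : Type*} [Fintype ι] (η : ℝ) (k δ ω : ι → ℝ) (t x : ℝ) : ℝ :=
  ∑ j, Real.exp ((k j * x - ω j * t + δ j) / η)

section KinkSum

variable {ι : Type*} [Fintype ι] (η : ℝ) (k δ ω : ι → ℝ) (t x : ℝ)

theorem kinkSum_pos [Nonempty ι] : 0 < kinkSum η k δ ω t x :=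
  Finset.sum_pos (fun _ _ => Real.exp_pos _) Finset.univ_nonempty

theorem contDiff_kinkSum {n : WithTop ℕ∞} : ContDiff ℝ n (kinkSum η k δ ω t) := by
  unfold kinkSum
  fun_prop

theorem differentiable_kinkSum : Differentiable ℝ (kinkSum η k δ ω t) :=
  (contDiff_kinkSum η k δ ω t).differentiable one_ne_zero

theorem differentiable_deriv_kinkSum : Differentiable ℝ (deriv (kinkSum η k δ ω t)) :=
  (contDiff_kinkSum η k δ ω t).differentiable_deriv_two

theorem deriv_log_kinkSum [Nonempty ι] :
    deriv (fun y => Real.log (kinkSum η k δ ω t y)) x = logDeriv (kinkSum η k δ ω t) x :=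
  Real.deriv_log_comp_eq_logDeriv (differentiable_kinkSum η k δ ω t x)
    (kinkSum_pos η k δ ω t x).ne'

theorem deriv_kinkSum :
    deriv (kinkSum η k δ ω t) x =
      ∑ j, Real.exp ((k j * x - ω j * t + δ j) / η) * (k j / η) := by
  refine HasDerivAt.deriv (HasDerivAt.fun_sum fun j _ => HasDerivAt.exp ?_)
  exact (((hasDerivAt_const_mul (k j)).sub_const (ω j * t)).add_const (δ j)).div_const η

variable {k ω} {ω₀ : ℝ}

theorem deriv_kinkSum_eq_exp_mul_deriv_kinkSum_zero (hω : ∀ j, k j ≠ 0 → ω j = ω₀) :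
    deriv (kinkSum η k δ ω t) x =
      Real.exp (-ω₀ * t / η) * deriv (kinkSum η k δ ω 0) x := by
  rw [deriv_kinkSum, deriv_kinkSum, Finset.mul_sum]
  refine Finset.sum_congr rfl fun j _ => ?_
  by_cases hkj : k j = 0
  · simp [hkj]
  · rw [hω j hkj, ← mul_assoc, ← Real.exp_add]
    ring_nf

theorem deriv_kinkSum_ne_zero_iff (hω : ∀ j, k j ≠ 0 → ω j = ω₀) :
    deriv (kinkSum η k δ ω t) x ≠ 0 ↔ deriv (kinkSum η k δ ω 0) x ≠ 0 := by
  rw [deriv_kinkSum_eq_exp_mul_deriv_kinkSum_zero η δ t x hω]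
  exact mul_ne_zero_iff_left (Real.exp_ne_zero _)

theorem logDeriv_deriv_kinkSum (hω : ∀ j, k j ≠ 0 → ω j = ω₀) :
    logDeriv (deriv (kinkSum η k δ ω t)) x = logDeriv (deriv (kinkSum η k δ ω 0)) x := by
  have hseparated : deriv (kinkSum η k δ ω t) =
      fun y => Real.exp (-ω₀ * t / η) * deriv (kinkSum η k δ ω 0) y :=
    funext fun y => deriv_kinkSum_eq_exp_mul_deriv_kinkSum_zero η δ t y hω
  rw [hseparated, logDeriv_const_mul x _ (Real.exp_ne_zero _)]

variable {η x}

theorem viscousDensity_const_mul_logDeriv_kinkSum [Nonempty ι]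
    (hω : ∀ j, k j ≠ 0 → ω j = ω₀) (hx : deriv (kinkSum η k δ ω 0) x ≠ 0) :
    viscousDensity η (fun y => η * logDeriv (kinkSum η k δ ω t) y) x =
      η * logDeriv (deriv (kinkSum η k δ ω 0)) x := by
  rw [viscousDensity_const_mul_logDeriv η (kinkSum_pos η k δ ω t x).ne'
    ((deriv_kinkSum_ne_zero_iff η δ t x hω).2 hx) (differentiable_kinkSum η k δ ω t x)
    (differentiable_deriv_kinkSum η k δ ω t x), logDeriv_deriv_kinkSum η δ t x hω]

end KinkSum

theorem multikink_degenerate_solves_viscous_E2_general {ι : Type*} [Fintype ι] [Nonempty ι]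
    {η : ℝ} {k δ ω : ι → ℝ} {ω₀ : ℝ} (hω : ∀ j, k j ≠ 0 → ω j = ω₀)
    {θ : ι → ℝ → ℝ → ℝ} (hθ : ∀ j X T, θ j X T = k j * X - ω j * T + δ j)
    {u : ℝ → ℝ → ℝ}
    (hu : ∀ X T, u X T = η * deriv (fun x => Real.log (∑ j, Real.exp (θ j x T / η))) X)
    {X T : ℝ} (hX : u X T ≠ 0) :
    HasDerivAt (fun t => u X t + η / u X t * deriv (fun x => u x t) X) 0 T := by
  have hu_logDeriv : ∀ x t, u x t = η * logDeriv (kinkSum η k δ ω t) x := by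
    intro x t
    simp only [hu, hθ, ← deriv_log_kinkSum, kinkSum]
  have hslope : deriv (kinkSum η k δ ω 0) X ≠ 0 := by
    rw [hu_logDeriv, logDeriv_apply] at hX
    exact (deriv_kinkSum_ne_zero_iff η δ T X hω).1 (div_ne_zero_iff.1 (right_ne_zero_of_mul hX)).1
  have hdensity : ∀ t, u X t + η / u X t * deriv (fun x => u x t) X =
      η * logDeriv (deriv (kinkSum η k δ ω 0)) X := by
    intro t
    simp only [hu_logDeriv]
    exact viscousDensity_const_mul_logDeriv_kinkSum δ t hω hslope
  simpa only [hdensity] using hasDerivAt_const T _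

/-- In the degenerate case `Δ = 0`, the multi-kink function
`u = η ∂_X log(Σ_{j=0}^N e^{θ_j/η})`, with `θ_j(X,T) = k_j X - ω_j T + δ_j`,
`k 0 = 0`, `ω 0 = 0`, `k j ≠ 0` and `ω j = ω⁰` for `j ≠ 0`, satisfies
`∂_T (u + (η/u) ∂_X u) = 0` wherever `u ≠ 0`. -/
theorem multikink_degenerate_solves_viscous_E2
    (η : ℝ) (hη : 0 < η) (N : ℕ) (hN : 1 ≤ N)
    (k δ ω : Fin (N + 1) → ℝ) (ω₀ : ℝ)
    (hk0 : k 0 = 0) (hω0 : ω 0 = 0)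
    (hkne : ∀ j, j ≠ 0 → k j ≠ 0) (hωj : ∀ j, j ≠ 0 → ω j = ω₀)
    (θ : Fin (N + 1) → ℝ → ℝ → ℝ)
    (hθ : ∀ j X T, θ j X T = k j * X - ω j * T + δ j)
    (u : ℝ → ℝ → ℝ)
    (hu : ∀ X T, u X T =
      η * deriv (fun x => Real.log (∑ j, Real.exp (θ j x T / η))) X) :
    ∀ X T, u X T ≠ 0 →
      deriv (fun t => u X t + η / u X t * deriv (fun x => u x t) X) T = 0 := by
  have hω : ∀ j, k j ≠ 0 → ω j = ω₀ := fun j hkj => hωj j fun hj => hkj (hj ▸ hk0)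
  exact fun _ _ hX =>
    (multikink_degenerate_solves_viscous_E2_general hω hθ hu hX).deriv
end

section
/- Let η > 0, let k_1, …, k_N be pairwise distinct nonzero real numbers, all of the same sign or more generally with k_+ k_− ≠ 0 where k_+ = max_j k_j and k_− = min_j k_j, let δ_1, …, δ_N be real, set θ_j(X,T) = k_j X − T/k_j + δ_j, and let u(X,T) = (Σ_j k_j e^{θ_j/η}) / (Σ_j e^{θ_j/η}). Then for every fixed T the momentum density X ↦ −∂_T u(X,T) is integrable over ℝ, and the total momentum P(T) = −∫_{−∞}^{∞} ∂_T u(X,T) dX equals (k_− − k_+)/(k_− k_+); in particular P(T) is independent of T. -/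
/-!
The multi-kink is the average of the wavenumbers `k j` under the Gibbs weights
`exp (θ j / η) / ∑ i, exp (θ i / η)`. Differentiating a Gibbs average along a parameter produces the
covariance with the velocities of the exponents, and covariance is symmetric. Hence for exponents
`(k j * X - ω (k j) * T + δ j) / η` the time derivative of the average of `k` is the space
derivative of the average of `-ω ∘ k`. The Gibbs weights concentrate on the largest wavenumber as
`X → ∞` and on the smallest as `X → -∞`, so the total momentum is `ω k₊ - ω k₋`; here `ω κ = κ⁻¹`.

For integrability, the variance of `k` is `η` times the derivative of the increasing function
`X ↦ ⟨k⟩`, which has finite limits, and `ω` is Lipschitz on the finite set of wavenumbers, so the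
covariance of `ω ∘ k` and `k` is dominated by a multiple of that variance.
-/

open Filter Function MeasureTheory Set Topology

theorem integrable_of_hasDerivAt_of_nonneg_of_tendsto {g g' : ℝ → ℝ} {a b : ℝ}
    (hderiv : ∀ x, HasDerivAt g (g' x) x) (hnonneg : ∀ x, 0 ≤ g' x)
    (hbot : Tendsto g atBot (𝓝 a)) (htop : Tendsto g atTop (𝓝 b)) : Integrable g' := by
  have hright : IntegrableOn g' (Ioi 0) :=
    integrableOn_Ioi_deriv_of_nonneg' (fun x _ ↦ hderiv x) (fun x _ ↦ hnonneg x) htop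
  have hleft : IntegrableOn g' (Iic 0) := by
    have hreflect : ∀ x, HasDerivAt (fun y ↦ -g (-y)) (g' (-x)) x := fun x ↦ by
      simpa using! ((hderiv (-x)).scomp x (hasDerivAt_neg x)).fun_neg
    have hlim : Tendsto (fun y ↦ -g (-y)) atTop (𝓝 (-a)) :=
      (hbot.comp tendsto_neg_atTop_atBot).neg
    have hint : IntegrableOn (fun x ↦ g' (-x)) (Ioi 0) :=
      integrableOn_Ioi_deriv_of_nonneg' (fun x _ ↦ hreflect x) (fun x _ ↦ hnonneg (-x)) hlim
    rw [integrableOn_Iic_iff_integrableOn_Iio]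
    simpa using hint.comp_neg
  rw [← integrableOn_univ, ← Iic_union_Ioi (a := (0 : ℝ))]
  exact hleft.union hright

theorem exists_abs_sub_le_mul_of_factorsThrough {ι : Type*} [Finite ι] {a b : ι → ℝ}
    (hab : a.FactorsThrough b) : ∃ C, ∀ i j, |a i - a j| ≤ C * |b i - b j| := by
  obtain ⟨C, hC⟩ := (finite_range fun p : ι × ι ↦ |a p.1 - a p.2| / |b p.1 - b p.2|).bddAbove
  refine ⟨C, fun i j ↦ ?_⟩
  by_cases hij : b i = b j
  · simp [hij, hab hij]
  · exact (div_le_iff₀ (abs_pos.2 (sub_ne_zero.2 hij))).1 (hC (mem_range_self (i, j)))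

section Gibbs

variable {ι : Type*} [Fintype ι]

/-- The Gibbs (softmax) weight of the index `j` for the exponents `f`; these are the weights with
which the wavenumbers enter the multi-kink. -/
noncomputable def gibbsWeight (f : ι → ℝ) (j : ι) : ℝ :=
  Real.exp (f j) / ∑ i, Real.exp (f i)

/-- The average of `a` under the Gibbs weights with exponents `f`; the multi-kink has this form. -/
noncomputable def gibbsMean (f a : ι → ℝ) : ℝ :=
  ∑ j, gibbsWeight f j * a j

/-- The covariance of `a` and `b` under the Gibbs weights with exponents `f`, which governs how the
Gibbs mean of `a` responds to moving the exponents in the direction `b`. -/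
noncomputable def gibbsCov (f a b : ι → ℝ) : ℝ :=
  gibbsMean f (a * b) - gibbsMean f a * gibbsMean f b

theorem gibbsWeight_nonneg (f : ι → ℝ) (j : ι) : 0 ≤ gibbsWeight f j := by
  unfold gibbsWeight
  positivity

theorem sum_exp_pos [Nonempty ι] (f : ι → ℝ) : 0 < ∑ j, Real.exp (f j) :=
  Finset.sum_pos (fun j _ ↦ Real.exp_pos (f j)) Finset.univ_nonempty

theorem sum_gibbsWeight [Nonempty ι] (f : ι → ℝ) : ∑ j, gibbsWeight f j = 1 := by
  simp only [gibbsWeight, ← Finset.sum_div]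
  exact div_self (sum_exp_pos f).ne'

theorem gibbsWeight_le_exp_sub (f : ι → ℝ) (j m : ι) :
    gibbsWeight f j ≤ Real.exp (f j - f m) := by
  rw [gibbsWeight, Real.exp_sub]
  gcongr
  exact Finset.single_le_sum (fun i _ ↦ (Real.exp_pos (f i)).le) (Finset.mem_univ m)

theorem gibbsMean_eq_sum_div_sum (f a : ι → ℝ) :
    gibbsMean f a = (∑ j, a j * Real.exp (f j)) / ∑ j, Real.exp (f j) := by
  simp only [gibbsMean, gibbsWeight, Finset.sum_div]
  exact Finset.sum_congr rfl fun j _ ↦ by ring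

theorem gibbsMean_const_smul (f : ι → ℝ) (r : ℝ) (a : ι → ℝ) :
    gibbsMean f (r • a) = r * gibbsMean f a := by
  simp only [gibbsMean, Pi.smul_apply, smul_eq_mul, Finset.mul_sum, mul_left_comm]

theorem gibbsMean_eq_add_sum [Nonempty ι] (f a : ι → ℝ) (c : ℝ) :
    gibbsMean f a = c + ∑ j, gibbsWeight f j * (a j - c) := by
  simp only [gibbsMean, mul_sub, Finset.sum_sub_distrib, ← Finset.sum_mul, sum_gibbsWeight]
  ring

theorem gibbsCov_comm (f a b : ι → ℝ) : gibbsCov f a b = gibbsCov f b a := by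
  simp only [gibbsCov, mul_comm]

theorem gibbsCov_const_smul_right (f a : ι → ℝ) (r : ℝ) (b : ι → ℝ) :
    gibbsCov f a (r • b) = r * gibbsCov f a b := by
  simp only [gibbsCov, mul_smul_comm, gibbsMean_const_smul]
  ring

theorem gibbsCov_eq_half_sum [Nonempty ι] (f a b : ι → ℝ) :
    gibbsCov f a b = (∑ i, ∑ j,
      gibbsWeight f i * gibbsWeight f j * ((a i - a j) * (b i - b j))) / 2 := by
  have expand : ∀ i j,
      gibbsWeight f i * gibbsWeight f j * ((a i - a j) * (b i - b j)) =
        gibbsWeight f i * (a * b) i * gibbsWeight f j +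
          gibbsWeight f i * (gibbsWeight f j * (a * b) j) -
          gibbsWeight f i * a i * (gibbsWeight f j * b j) -
          gibbsWeight f i * b i * (gibbsWeight f j * a j) := fun i j ↦ by
    simp only [Pi.mul_apply]
    ring
  simp only [expand, Finset.sum_add_distrib, Finset.sum_sub_distrib, ← Finset.mul_sum,
    ← Finset.sum_mul, sum_gibbsWeight, gibbsCov, gibbsMean]
  ring

theorem gibbsCov_self_nonneg [Nonempty ι] (f a : ι → ℝ) : 0 ≤ gibbsCov f a a := by
  rw [gibbsCov_eq_half_sum]
  exact div_nonneg (Finset.sum_nonneg fun i _ ↦ Finset.sum_nonneg fun j _ ↦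
    mul_nonneg (mul_nonneg (gibbsWeight_nonneg f i) (gibbsWeight_nonneg f j))
      (mul_self_nonneg _)) zero_le_two

theorem abs_gibbsCov_le [Nonempty ι] (f : ι → ℝ) {a b : ι → ℝ} {C : ℝ}
    (hC : ∀ i j, |a i - a j| ≤ C * |b i - b j|) :
    |gibbsCov f a b| ≤ C * gibbsCov f b b := by
  have term_le : ∀ i j, |gibbsWeight f i * gibbsWeight f j * ((a i - a j) * (b i - b j))| ≤
      C * (gibbsWeight f i * gibbsWeight f j * ((b i - b j) * (b i - b j))) := fun i j ↦ by
    have hw : 0 ≤ gibbsWeight f i * gibbsWeight f j :=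
      mul_nonneg (gibbsWeight_nonneg f i) (gibbsWeight_nonneg f j)
    calc |gibbsWeight f i * gibbsWeight f j * ((a i - a j) * (b i - b j))|
        = gibbsWeight f i * gibbsWeight f j * (|a i - a j| * |b i - b j|) := by
          rw [abs_mul, abs_of_nonneg hw, abs_mul]
      _ ≤ gibbsWeight f i * gibbsWeight f j * (C * |b i - b j| * |b i - b j|) := by
          gcongr
          exact hC i j
      _ = C * (gibbsWeight f i * gibbsWeight f j * ((b i - b j) * (b i - b j))) := by
          rw [mul_assoc C, abs_mul_abs_self]
          ring
  rw [gibbsCov_eq_half_sum, gibbsCov_eq_half_sum, abs_div, abs_two, ← mul_div_assoc]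
  gcongr
  simp only [Finset.mul_sum]
  exact (Finset.abs_sum_le_sum_abs _ _).trans <| Finset.sum_le_sum fun i _ ↦
    (Finset.abs_sum_le_sum_abs _ _).trans <| Finset.sum_le_sum fun j _ ↦ term_le i j

theorem continuous_gibbsCov [Nonempty ι] {α : Type*} [TopologicalSpace α] {f : α → ι → ℝ}
    (hf : Continuous f) (a b : ι → ℝ) :
    Continuous fun y ↦ gibbsCov (f y) a b := by
  have hZ := fun y ↦ (sum_exp_pos (f y)).ne'
  simp only [gibbsCov, gibbsMean, gibbsWeight]
  fun_prop (disch := exact hZ _)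

theorem tendsto_gibbsMean {α : Type*} {l : Filter α} {f : α → ι → ℝ} {a : ι → ℝ} {m : ι}
    (h : ∀ j, a j = a m ∨ Tendsto (fun y ↦ f y j - f y m) l atBot) :
    Tendsto (fun y ↦ gibbsMean (f y) a) l (𝓝 (a m)) := by
  have : Nonempty ι := ⟨m⟩
  have term_tendsto : ∀ j, Tendsto (fun y ↦ gibbsWeight (f y) j * (a j - a m)) l (𝓝 0) := by
    intro j
    rcases h j with heq | hbot
    · simpa [heq] using tendsto_const_nhds
    · have hweight : Tendsto (fun y ↦ gibbsWeight (f y) j) l (𝓝 0) :=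
        squeeze_zero (fun y ↦ gibbsWeight_nonneg (f y) j)
          (fun y ↦ gibbsWeight_le_exp_sub (f y) j m) (Real.tendsto_exp_atBot.comp hbot)
      simpa using hweight.mul_const (a j - a m)
  simp only [gibbsMean_eq_add_sum _ a (a m)]
  simpa using (tendsto_finsetSum Finset.univ fun j _ ↦ term_tendsto j).const_add (a m)

section Deriv

variable [Nonempty ι] {f : ℝ → ι → ℝ} {f' : ι → ℝ} {x : ℝ}

theorem hasDerivAt_gibbsWeight (hf : ∀ j, HasDerivAt (fun y ↦ f y j) (f' j) x) (j : ι) :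
    HasDerivAt (fun y ↦ gibbsWeight (f y) j)
      (gibbsWeight (f x) j * (f' j - gibbsMean (f x) f')) x := by
  have hZ := (sum_exp_pos (f x)).ne'
  have hquot := (hf j).exp.fun_div (HasDerivAt.fun_sum fun i (_ : i ∈ Finset.univ) ↦ (hf i).exp) hZ
  refine hquot.congr_deriv ?_
  simp only [gibbsMean_eq_sum_div_sum, gibbsWeight, mul_comm (f' _)]
  field_simp

theorem hasDerivAt_gibbsMean (hf : ∀ j, HasDerivAt (fun y ↦ f y j) (f' j) x) (a : ι → ℝ) :
    HasDerivAt (fun y ↦ gibbsMean (f y) a) (gibbsCov (f x) a f') x := by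
  refine (HasDerivAt.fun_sum fun j _ ↦
    (hasDerivAt_gibbsWeight hf j).mul_const (a j)).congr_deriv ?_
  rw [gibbsCov, gibbsMean.eq_def _ (a * f'), gibbsMean.eq_def _ a, Finset.sum_mul,
    ← Finset.sum_sub_distrib]
  exact Finset.sum_congr rfl fun j _ ↦ by simp only [Pi.mul_apply]; ring

end Deriv

section AffineExponents

variable {a s : ι → ℝ} {m M : ι}

theorem tendsto_gibbsMean_affine_atTop (d : ι → ℝ) (ha : a.FactorsThrough s)
    (hM : ∀ j, s j ≤ s M) :
    Tendsto (fun x ↦ gibbsMean (fun j ↦ s j * x + d j) a) atTop (𝓝 (a M)) := by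
  refine tendsto_gibbsMean fun j ↦ (hM j).eq_or_lt.imp (fun heq ↦ ha heq) fun hlt ↦ ?_
  simp only [add_sub_add_comm, ← sub_mul]
  exact tendsto_atBot_add_const_right _ _ (tendsto_id.const_mul_atTop_of_neg (sub_neg.2 hlt))

theorem tendsto_gibbsMean_affine_atBot (d : ι → ℝ) (ha : a.FactorsThrough s)
    (hm : ∀ j, s m ≤ s j) :
    Tendsto (fun x ↦ gibbsMean (fun j ↦ s j * x + d j) a) atBot (𝓝 (a m)) := by
  refine tendsto_gibbsMean fun j ↦
    (hm j).eq_or_lt.imp (fun heq ↦ ha heq.symm) fun hlt ↦ ?_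
  simp only [add_sub_add_comm, ← sub_mul]
  exact tendsto_atBot_add_const_right _ _ (tendsto_id.const_mul_atBot (sub_pos.2 hlt))

theorem hasDerivAt_gibbsMean_affine [Nonempty ι] (s d a : ι → ℝ) (x : ℝ) :
    HasDerivAt (fun y ↦ gibbsMean (fun j ↦ s j * y + d j) a)
      (gibbsCov (fun j ↦ s j * x + d j) a s) x :=
  hasDerivAt_gibbsMean (f := fun y j ↦ s j * y + d j)
    (fun j ↦ ((hasDerivAt_id x).const_mul (s j)).add_const (d j) |>.congr_deriv (mul_one _)) a

theorem integrable_gibbsCov_affine [Nonempty ι] (d : ι → ℝ) (ha : a.FactorsThrough s) :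
    Integrable fun x ↦ gibbsCov (fun j ↦ s j * x + d j) a s := by
  obtain ⟨M, hM⟩ := Finite.exists_max s
  obtain ⟨m, hm⟩ := Finite.exists_min s
  obtain ⟨C, hC⟩ := exists_abs_sub_le_mul_of_factorsThrough ha
  have hvar : Integrable fun x ↦ gibbsCov (fun j ↦ s j * x + d j) s s :=
    integrable_of_hasDerivAt_of_nonneg_of_tendsto (hasDerivAt_gibbsMean_affine s d s)
      (fun x ↦ gibbsCov_self_nonneg _ s) (tendsto_gibbsMean_affine_atBot d (fun _ _ h ↦ h) hm)
      (tendsto_gibbsMean_affine_atTop d (fun _ _ h ↦ h) hM)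
  exact (hvar.const_mul C).mono'
    (continuous_gibbsCov (by fun_prop) a s).aestronglyMeasurable
    (Eventually.of_forall fun x ↦ abs_gibbsCov_le _ hC)

theorem integral_gibbsCov_affine (d : ι → ℝ) (ha : a.FactorsThrough s)
    (hM : ∀ j, s j ≤ s M) (hm : ∀ j, s m ≤ s j) :
    ∫ x, gibbsCov (fun j ↦ s j * x + d j) a s = a M - a m := by
  have : Nonempty ι := ⟨M⟩
  exact integral_of_hasDerivAt_of_tendsto (hasDerivAt_gibbsMean_affine s d a)
    (integrable_gibbsCov_affine d ha) (tendsto_gibbsMean_affine_atBot d ha hm)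
    (tendsto_gibbsMean_affine_atTop d ha hM)

end AffineExponents

end Gibbs

section MultiKink

variable {ι : Type*} [Fintype ι]

/-- The multi-kink with wavenumbers `k`, phase shifts `δ` and viscosity `η`, for an arbitrary
dispersion relation `ω`: the phases are `k j * X - ω (k j) * T + δ j`. The kinks of the theorem have
`ω κ = κ⁻¹`. -/
noncomputable def multiKink (η : ℝ) (ω : ℝ → ℝ) (k δ : ι → ℝ) (X T : ℝ) : ℝ :=
  gibbsMean (fun j ↦ (k j * X - ω (k j) * T + δ j) / η) k

theorem deriv_multiKink_time [Nonempty ι] (η : ℝ) (ω : ℝ → ℝ) (k δ : ι → ℝ) (X T : ℝ) :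
    deriv (fun t ↦ multiKink η ω k δ X t) T =
      -gibbsCov (fun j ↦ (η⁻¹ • k) j * X + (δ j - ω (k j) * T) / η) (ω ∘ k) (η⁻¹ • k) := by
  have hphase : ∀ j, HasDerivAt (fun t ↦ (k j * X - ω (k j) * t + δ j) / η)
      ((-η⁻¹ • (ω ∘ k)) j) T := fun j ↦
    (((((hasDerivAt_id T).const_mul (ω (k j))).const_sub (k j * X)).add_const (δ j)).div_const
      η).congr_deriv (by simp only [Pi.smul_apply, comp_apply, smul_eq_mul]; ring)
  have hsplit : (fun j ↦ (k j * X - ω (k j) * T + δ j) / η) =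
      fun j ↦ (η⁻¹ • k) j * X + (δ j - ω (k j) * T) / η := by
    ext j
    simp only [Pi.smul_apply, smul_eq_mul]
    ring
  calc deriv (fun t ↦ multiKink η ω k δ X t) T
      = gibbsCov (fun j ↦ (k j * X - ω (k j) * T + δ j) / η) k (-η⁻¹ • (ω ∘ k)) :=
        (hasDerivAt_gibbsMean
          (f := fun t j ↦ (k j * X - ω (k j) * t + δ j) / η) hphase k).deriv
    _ = -gibbsCov (fun j ↦ (k j * X - ω (k j) * T + δ j) / η) (ω ∘ k) (η⁻¹ • k) := by
        rw [gibbsCov_const_smul_right, gibbsCov_const_smul_right, gibbsCov_comm, neg_mul]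
    _ = _ := by rw [hsplit]

theorem multikink_total_momentum_general {η : ℝ} (hη : 0 < η) (ω : ℝ → ℝ) (k δ : ι → ℝ)
    {iMax iMin : ι} (hmax : ∀ j, k j ≤ k iMax) (hmin : ∀ j, k iMin ≤ k j) (T : ℝ) :
    Integrable (fun X ↦ deriv (fun t ↦ multiKink η ω k δ X t) T) ∧
      ∫ X, -deriv (fun t ↦ multiKink η ω k δ X t) T = ω (k iMax) - ω (k iMin) := by
  have : Nonempty ι := ⟨iMax⟩
  have hη' : 0 < η⁻¹ := inv_pos.2 hη
  have hfactors : (ω ∘ k).FactorsThrough (η⁻¹ • k) := fun i j hij ↦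
    congrArg ω (mul_left_cancel₀ hη'.ne' hij)
  simp only [deriv_multiKink_time, neg_neg]
  exact ⟨(integrable_gibbsCov_affine _ hfactors).neg,
    integral_gibbsCov_affine _ hfactors
      (fun j ↦ mul_le_mul_of_nonneg_left (hmax j) hη'.le)
      (fun j ↦ mul_le_mul_of_nonneg_left (hmin j) hη'.le)⟩

end MultiKink

/-- For every fixed `T`, the momentum density `-∂_T u(·,T)` of the
multi-kink solution is integrable over `ℝ` and the total momentum
`P(T) = -∫ ∂_T u dX` equals `(k₋ - k₊)/(k₋ k₊)`; in particular it does not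
depend on `T`. -/
theorem multikink_total_momentum
    (η : ℝ) (hη : 0 < η) (N : ℕ) (hN : 1 ≤ N)
    (k δ : Fin N → ℝ) (hk : ∀ j, k j ≠ 0) (hinj : Function.Injective k)
    (θ : Fin N → ℝ → ℝ → ℝ)
    (hθ : ∀ j X T, θ j X T = k j * X - T / k j + δ j)
    (u : ℝ → ℝ → ℝ)
    (hu : ∀ X T, u X T =
      (∑ j, k j * Real.exp (θ j X T / η)) / (∑ j, Real.exp (θ j X T / η)))
    (iMax iMin : Fin N) (hmax : ∀ j, k j ≤ k iMax) (hmin : ∀ j, k iMin ≤ k j)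
    (hprod : k iMax * k iMin ≠ 0) :
    ∀ T : ℝ,
      MeasureTheory.Integrable (fun X => deriv (fun t => u X t) T) ∧
      ∫ X : ℝ, -deriv (fun t => u X t) T
        = (k iMin - k iMax) / (k iMin * k iMax) := by
  have hmultiKink : u = multiKink η (·⁻¹) k δ := by
    ext X T
    simp only [hu, hθ, multiKink, gibbsMean_eq_sum_div_sum, div_eq_inv_mul T]
  rw [hmultiKink, mul_comm (k iMin),
    ← inv_sub_inv (left_ne_zero_of_mul hprod) (right_ne_zero_of_mul hprod)]
  exact multikink_total_momentum_general hη _ k δ hmax hmin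
end

section
/- Let u : ℝ² → ℝ be a smooth function with u(X,T) ≠ 0 for all (X,T), satisfying ∂_T u + ∂_X((1 + ∂_T u)/u) = 0 everywhere, and let λ be a real number with λ + u(X,T) ≠ 0 for all (X,T). Then the Bäcklund transform u^λ := (∂_X u)/(λ + u) + u satisfies ∂_T u^λ + ∂_X((1 + ∂_T u^λ)/u^λ) = 0 at every point (X,T) where u^λ(X,T) ≠ 0. -/
/-!
Put `v = λ + u`. The transform adds `∂_X log v` to the density: `u^λ = u + ∂_X log v`. The equation
for `u` is exactly what makes it subtract `∂_T log v` from the flux: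
`(1 + ∂_T u^λ) / u^λ = (1 + ∂_T u) / u - ∂_T log v`.
The two corrections cancel in the conservation law because mixed partial derivatives commute.
-/

open Filter Function Topology

section PartialDerivatives

variable {𝕜 E : Type*}

section NontriviallyNormedField

variable [NontriviallyNormedField 𝕜] [NormedAddCommGroup E] [NormedSpace 𝕜 E]

theorem hasFDerivAt_fderiv_apply {F : Type*} [NormedAddCommGroup F] [NormedSpace 𝕜 F] {f : F → E}
    {p : F} (hf : ContDiffAt 𝕜 2 f p) (v : F) :
    HasFDerivAt (fun q => fderiv 𝕜 f q v) ((fderiv 𝕜 (fderiv 𝕜 f) p).flip v) p := by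
  have hdf : DifferentiableAt 𝕜 (fderiv 𝕜 f) p :=
    (hf.fderiv_right (m := 1) one_add_one_eq_two.le).differentiableAt one_ne_zero
  simpa using hdf.hasFDerivAt.clm_apply (hasFDerivAt_const v p)

/-- The partial derivative in the first (space) variable; like `deriv`, it takes the value `0`
where the slice is not differentiable. -/
noncomputable def partialX (u : 𝕜 → 𝕜 → E) (x t : 𝕜) : E :=
  deriv (fun y => u y t) x

/-- The partial derivative in the second (time) variable; like `deriv`, it takes the value `0`
where the slice is not differentiable. -/
noncomputable def partialT (u : 𝕜 → 𝕜 → E) (x t : 𝕜) : E :=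
  deriv (fun s => u x s) t

variable {u : 𝕜 → 𝕜 → E} {x t : 𝕜}

theorem hasDerivAt_slice_left {u' : 𝕜 × 𝕜 →L[𝕜] E} (hu : HasFDerivAt (uncurry u) u' (x, t)) :
    HasDerivAt (fun y => u y t) (u' (1, 0)) x :=
  hu.comp_hasDerivAt (f := fun y => (y, t)) x ((hasDerivAt_id' x).prodMk (hasDerivAt_const x t))

theorem hasDerivAt_slice_right {u' : 𝕜 × 𝕜 →L[𝕜] E} (hu : HasFDerivAt (uncurry u) u' (x, t)) :
    HasDerivAt (fun s => u x s) (u' (0, 1)) t :=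
  hu.comp_hasDerivAt (f := fun s => (x, s)) t ((hasDerivAt_const t x).prodMk (hasDerivAt_id' t))

theorem hasDerivAt_partialX (hu : DifferentiableAt 𝕜 (uncurry u) (x, t)) :
    HasDerivAt (fun y => u y t) (partialX u x t) x :=
  (hasDerivAt_slice_left hu.hasFDerivAt).differentiableAt.hasDerivAt

theorem hasDerivAt_partialT (hu : DifferentiableAt 𝕜 (uncurry u) (x, t)) :
    HasDerivAt (fun s => u x s) (partialT u x t) t :=
  (hasDerivAt_slice_right hu.hasFDerivAt).differentiableAt.hasDerivAt

theorem uncurry_partialX_eventuallyEq_fderiv (hu : ContDiffAt 𝕜 1 (uncurry u) (x, t)) :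
    uncurry (partialX u) =ᶠ[𝓝 (x, t)] fun p => fderiv 𝕜 (uncurry u) p (1, 0) := by
  filter_upwards [hu.eventually (by simp)] with p hp
  exact (hasDerivAt_slice_left (hp.differentiableAt one_ne_zero).hasFDerivAt).deriv

theorem uncurry_partialT_eventuallyEq_fderiv (hu : ContDiffAt 𝕜 1 (uncurry u) (x, t)) :
    uncurry (partialT u) =ᶠ[𝓝 (x, t)] fun p => fderiv 𝕜 (uncurry u) p (0, 1) := by
  filter_upwards [hu.eventually (by simp)] with p hp
  exact (hasDerivAt_slice_right (hp.differentiableAt one_ne_zero).hasFDerivAt).deriv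

theorem hasFDerivAt_uncurry_partialX (hu : ContDiffAt 𝕜 2 (uncurry u) (x, t)) :
    HasFDerivAt (uncurry (partialX u))
      ((fderiv 𝕜 (fderiv 𝕜 (uncurry u)) (x, t)).flip (1, 0)) (x, t) :=
  (hasFDerivAt_fderiv_apply hu (1, 0)).congr_of_eventuallyEq
    (uncurry_partialX_eventuallyEq_fderiv (hu.of_le one_le_two))

theorem hasFDerivAt_uncurry_partialT (hu : ContDiffAt 𝕜 2 (uncurry u) (x, t)) :
    HasFDerivAt (uncurry (partialT u))
      ((fderiv 𝕜 (fderiv 𝕜 (uncurry u)) (x, t)).flip (0, 1)) (x, t) :=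
  (hasFDerivAt_fderiv_apply hu (0, 1)).congr_of_eventuallyEq
    (uncurry_partialT_eventuallyEq_fderiv (hu.of_le one_le_two))

theorem partialX_congr {v : 𝕜 → 𝕜 → E} (h : uncurry u =ᶠ[𝓝 (x, t)] uncurry v) :
    partialX u x t = partialX v x t :=
  EventuallyEq.deriv_eq <| h.comp_tendsto (Continuous.prodMk_left t).continuousAt.tendsto

theorem hasDerivAt_partialT_div_const_add {u : 𝕜 → 𝕜 → 𝕜} {c x t : 𝕜}
    (hu : ContDiffAt 𝕜 2 (uncurry u) (x, t)) (hc : c + u x t ≠ 0) :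
    HasDerivAt (fun y => partialT u y t / (c + u y t))
      ((partialX (partialT u) x t * (c + u x t) - partialX u x t * partialT u x t)
        / (c + u x t) ^ 2) x := by
  rw [mul_comm (partialX u x t)]
  exact (hasDerivAt_partialX (hasFDerivAt_uncurry_partialT hu).differentiableAt).fun_div
    ((hasDerivAt_partialX (hu.differentiableAt two_ne_zero)).const_add c) hc

end NontriviallyNormedField

section RCLike

variable [RCLike 𝕜]

theorem partialT_partialX_comm [NormedAddCommGroup E] [NormedSpace 𝕜 E] {u : 𝕜 → 𝕜 → E} {x t : 𝕜}
    (hu : ContDiffAt 𝕜 2 (uncurry u) (x, t)) :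
    partialT (partialX u) x t = partialX (partialT u) x t := by
  have hsymm : IsSymmSndFDerivAt 𝕜 (uncurry u) (x, t) :=
    hu.isSymmSndFDerivAt minSmoothness_of_isRCLikeNormedField.le
  calc partialT (partialX u) x t
      = fderiv 𝕜 (fderiv 𝕜 (uncurry u)) (x, t) (0, 1) (1, 0) :=
        (hasDerivAt_slice_right (hasFDerivAt_uncurry_partialX hu)).deriv
    _ = fderiv 𝕜 (fderiv 𝕜 (uncurry u)) (x, t) (1, 0) (0, 1) := hsymm.eq _ _
    _ = partialX (partialT u) x t :=
        (hasDerivAt_slice_left (hasFDerivAt_uncurry_partialT hu)).deriv.symm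

/-- This is `∂_T (∂_X log (c + u)) = ∂_X (∂_T log (c + u))`, written without the logarithm. -/
theorem hasDerivAt_partialX_div_const_add {u : 𝕜 → 𝕜 → 𝕜} {c x t : 𝕜}
    (hu : ContDiffAt 𝕜 2 (uncurry u) (x, t)) (hc : c + u x t ≠ 0) :
    HasDerivAt (fun s => partialX u x s / (c + u x s))
      (partialX (fun y s => partialT u y s / (c + u y s)) x t) t := by
  rw [partialX, (hasDerivAt_partialT_div_const_add hu hc).deriv, ← partialT_partialX_comm hu]
  exact (hasDerivAt_partialT (hasFDerivAt_uncurry_partialX hu).differentiableAt).fun_div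
    ((hasDerivAt_partialT (hu.differentiableAt two_ne_zero)).const_add c) hc

end RCLike

end PartialDerivatives

section Backlund

variable {𝕜 : Type*}

section NontriviallyNormedField

variable [NontriviallyNormedField 𝕜]

/-- The flux `(1 + ∂_T u) / u` of the conservation law (E1); it takes the value `0` at the
zeros of `u`. -/
noncomputable def flux (u : 𝕜 → 𝕜 → 𝕜) (x t : 𝕜) : 𝕜 :=
  (1 + partialT u x t) / u x t

/-- The equation (E1), `∂_T u + ∂_X ((1 + ∂_T u) / u) = 0`, at a single point. It is meaningful
where `u` does not vanish. -/
def IsSolutionAt (u : 𝕜 → 𝕜 → 𝕜) (x t : 𝕜) : Prop :=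
  partialT u x t + partialX (flux u) x t = 0

/-- The Bäcklund transform `u^λ = (∂_X u) / (λ + u) + u`. -/
noncomputable def backlund (lam : 𝕜) (u : 𝕜 → 𝕜 → 𝕜) (x t : 𝕜) : 𝕜 :=
  partialX u x t / (lam + u x t) + u x t

variable {u : 𝕜 → 𝕜 → 𝕜} {lam x t : 𝕜}

theorem hasDerivAt_flux (hu : ContDiffAt 𝕜 2 (uncurry u) (x, t)) (hne : u x t ≠ 0) :
    HasDerivAt (fun y => flux u y t)
      ((partialX (partialT u) x t * u x t - (1 + partialT u x t) * partialX u x t) / u x t ^ 2)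
      x :=
  ((hasDerivAt_partialX (hasFDerivAt_uncurry_partialT hu).differentiableAt).const_add 1).fun_div
    (hasDerivAt_partialX (hu.differentiableAt two_ne_zero)) hne

theorem continuousAt_uncurry_backlund (hu : ContDiffAt 𝕜 2 (uncurry u) (x, t))
    (hlam : lam + u x t ≠ 0) : ContinuousAt (uncurry (backlund lam u)) (x, t) :=
  ((hasFDerivAt_uncurry_partialX hu).continuousAt.div
    (continuousAt_const.add hu.continuousAt) hlam).add hu.continuousAt

theorem IsSolutionAt.partialX_partialT_eq (hsol : IsSolutionAt u x t)
    (hu : ContDiffAt 𝕜 2 (uncurry u) (x, t)) (hne : u x t ≠ 0) :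
    partialX (partialT u) x t
      = partialX u x t * (1 + partialT u x t) / u x t - u x t * partialT u x t := by
  rw [IsSolutionAt, partialX, (hasDerivAt_flux hu hne).deriv] at hsol
  field_simp at hsol ⊢
  linear_combination hsol

end NontriviallyNormedField

section RCLike

variable [RCLike 𝕜] {u : 𝕜 → 𝕜 → 𝕜} {lam x t : 𝕜}

theorem hasDerivAt_backlund (hu : ContDiffAt 𝕜 2 (uncurry u) (x, t)) (hlam : lam + u x t ≠ 0) :
    HasDerivAt (fun s => backlund lam u x s)
      (partialX (fun y s => partialT u y s / (lam + u y s)) x t + partialT u x t) t :=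
  (hasDerivAt_partialX_div_const_add hu hlam).add
    (hasDerivAt_partialT (hu.differentiableAt two_ne_zero))

theorem IsSolutionAt.flux_backlund (hsol : IsSolutionAt u x t)
    (hu : ContDiffAt 𝕜 2 (uncurry u) (x, t)) (hne : u x t ≠ 0) (hlam : lam + u x t ≠ 0)
    (hB : backlund lam u x t ≠ 0) :
    flux (backlund lam u) x t = flux u x t - partialT u x t / (lam + u x t) := by
  rw [flux, div_eq_iff hB, partialT, (hasDerivAt_backlund hu hlam).deriv, partialX,
    (hasDerivAt_partialT_div_const_add hu hlam).deriv, hsol.partialX_partialT_eq hu hne,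
    backlund, flux]
  field_simp
  ring

theorem flux_backlund_eventuallyEq (hu : ContDiffAt 𝕜 2 (uncurry u) (x, t)) (hne : u x t ≠ 0)
    (hlam : lam + u x t ≠ 0) (hsol : ∀ᶠ p in 𝓝 (x, t), IsSolutionAt u p.1 p.2)
    (hB : backlund lam u x t ≠ 0) :
    uncurry (flux (backlund lam u)) =ᶠ[𝓝 (x, t)]
      uncurry fun y s => flux u y s - partialT u y s / (lam + u y s) := by
  have hne_near : ∀ᶠ p in 𝓝 (x, t), uncurry u p ≠ 0 := hu.continuousAt.eventually_ne hne
  have hlam_near : ∀ᶠ p in 𝓝 (x, t), lam + uncurry u p ≠ 0 :=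
    (continuousAt_const.add hu.continuousAt).eventually_ne hlam
  have hB_near : ∀ᶠ p in 𝓝 (x, t), uncurry (backlund lam u) p ≠ 0 :=
    (continuousAt_uncurry_backlund hu hlam).eventually_ne hB
  filter_upwards [hu.eventually (by simp), hne_near, hlam_near, hsol, hB_near]
    with p hup hnep hlamp hsolp hBp
  exact hsolp.flux_backlund hup hnep hlamp hBp

theorem backlund_one_parameter_general (hu : ContDiffAt 𝕜 2 (uncurry u) (x, t)) (hne : u x t ≠ 0)
    (hlam : lam + u x t ≠ 0) (hsol : ∀ᶠ p in 𝓝 (x, t), IsSolutionAt u p.1 p.2)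
    (hB : backlund lam u x t ≠ 0) : IsSolutionAt (backlund lam u) x t := by
  have hdensity : partialT (backlund lam u) x t
      = partialX (fun y s => partialT u y s / (lam + u y s)) x t + partialT u x t :=
    (hasDerivAt_backlund hu hlam).deriv
  have hflux_near := flux_backlund_eventuallyEq hu hne hlam hsol hB
  have hflux : partialX (flux (backlund lam u)) x t
      = partialX (flux u) x t - partialX (fun y s => partialT u y s / (lam + u y s)) x t :=
    (partialX_congr hflux_near).trans <|
      deriv_fun_sub (hasDerivAt_flux hu hne).differentiableAt
        (hasDerivAt_partialT_div_const_add hu hlam).differentiableAt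
  have hsol_here : partialT u x t + partialX (flux u) x t = 0 := hsol.self_of_nhds
  rw [IsSolutionAt, hdensity, hflux]
  linear_combination hsol_here

end RCLike

end Backlund

/-- The one-parameter Bäcklund transform
`u^λ = (∂_X u)/(λ + u) + u` of a smooth nowhere-vanishing solution `u` of
`∂_T u + ∂_X((1 + ∂_T u)/u) = 0` (with `λ + u ≠ 0` everywhere) again satisfies
the same equation wherever `u^λ ≠ 0`. -/
theorem backlund_one_parameter
    (u : ℝ → ℝ → ℝ)
    (hsmooth : ContDiff ℝ (⊤ : ℕ∞) (fun p : ℝ × ℝ => u p.1 p.2))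
    (hne : ∀ X T, u X T ≠ 0)
    (hpde : ∀ X T,
      deriv (fun t => u X t) T
        + deriv (fun x => (1 + deriv (fun t => u x t) T) / u x T) X = 0)
    (lam : ℝ) (hlam : ∀ X T, lam + u X T ≠ 0)
    (uL : ℝ → ℝ → ℝ)
    (huL : ∀ X T, uL X T = deriv (fun x => u x T) X / (lam + u X T) + u X T) :
    ∀ X T, uL X T ≠ 0 →
      deriv (fun t => uL X t) T
        + deriv (fun x => (1 + deriv (fun t => uL x t) T) / uL x T) X = 0 := by
  obtain rfl : uL = backlund lam u := funext₂ huL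
  exact fun X T => backlund_one_parameter_general
    (contDiff_infty.1 hsmooth 2).contDiffAt (hne X T) (hlam X T)
    (.of_forall fun p => hpde p.1 p.2)
end
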